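/- Failure of weak unique continuation from slab domains in two dimensions: Let s ∈ (0,1) and h > 0. Then there exist a sequence u = {u_j}_{j∈ℤ²} ∈ ℓ_s, not identically zero, and a bounded sequence V = {V_j}_{j∈ℤ²} such that (−Δ_d)^s u_j = V_j u_j for all j = (j_1,j_2) ∈ ℤ², while u_j = 0 for all j with j_1 ∈ {−1,0,1}. -/

import Mathlib

open scoped BigOperators
open MeasureTheory

/-- Modified Bessel function of the first kind of integer order `k`. -/
noncomputable def besselI (k : ℤ) (t : ℝ) : ℝ :=
  ∑' ℓ : ℕ, (t / 2) ^ (2 * ℓ + k.natAbs) /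
    ((Nat.factorial ℓ : ℝ) * Real.Gamma ((ℓ : ℝ) + (k.natAbs : ℝ) + 1))

/-- Semidiscrete heat kernel `G(m,t) = e^{-2dt} ∏ I_{m_i}(2t)` on `ℤ^d`. -/
noncomputable def heatG (d : ℕ) (m : Fin d → ℤ) (t : ℝ) : ℝ :=
  Real.exp (-(2 * (d : ℝ) * t)) * ∏ i, besselI (m i) (2 * t)

/-- The discrete kernel `K_s^h(m)`, with `K_s^h(0) = 0`. -/
noncomputable def Ksh (d : ℕ) (h s : ℝ) (m : Fin d → ℤ) : ℝ :=
  if m = 0 then 0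
  else h ^ (-(2 * s)) * |Real.Gamma (-s)|⁻¹ *
    ∫ t in Set.Ioi (0 : ℝ), heatG d m t / t ^ (1 + s)

/-- Membership in the space `ℓ_s`. -/
def memLs (d : ℕ) (s : ℝ) (u : (Fin d → ℤ) → ℝ) : Prop :=
  Summable fun m : Fin d → ℤ =>
    |u m| * (1 + Real.sqrt (∑ i, ((m i : ℝ)) ^ 2)) ^ (-((d : ℝ) + 2 * s))

/-- The fractional discrete Laplacian `(-Δ_d)^s u_j = ∑_{m} (u_j - u_m) K_s^h(j-m)`
(the `m = j` term vanishes since `K_s^h(0) = 0`). -/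
noncomputable def fracLap (d : ℕ) (h s : ℝ) (u : (Fin d → ℤ) → ℝ) (j : Fin d → ℤ) : ℝ :=
  ∑' m : Fin d → ℤ, (u j - u m) * Ksh d h s (j - m)

/-!
On functions of the first coordinate alone, the fractional discrete Laplacian acts as a
one-dimensional convolution operator whose kernel `k` is the marginal of `Ksh`. This kernel is even.
It is summable because the heat kernel has mass one, so that its mass off the origin is
`1 - heatG d 0 t = O(min t 1)`. Moreover `k (n + 2) < k n` for `n ≥ 1`, because the terms of
`besselI (n + 2)` are dominated by those of `besselI n` shifted by one place.

Take a profile `f` on `ℤ` which is odd, vanishes at `1`, is `-b` at `2` and is constantly `a` from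
`3` on. By oddness the operator sends `f` to an odd function, and its value at `1` is
`b * k 1 - a * k 2 - (a + b) * k 3`. For `a = k 1 - k 3` and `b = k 2 + k 3`, both nonzero, it
therefore vanishes on `{-1, 0, 1}`. Off the slab `|f|` only takes the values `|a|` and `|b|`, so the
quotient of the image of `f` by `f` is a bounded potential.
-/

lemma prod_comp_consEquiv {α R : Type*} [CommMonoid R] (g : α → R) (d : ℕ) :
    (fun m : Fin (d + 1) → α => ∏ i, g (m i)) ∘ Fin.consEquiv (fun _ => α) =
      fun p : α × (Fin d → α) => g p.1 * ∏ i, g (p.2 i) := by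
  funext p
  simp [Fin.consEquiv, Fin.prod_univ_succ]

lemma summable_norm_prod_fin {α R : Type*} [NormedCommRing R] {g : α → R}
    (hg : Summable fun x => ‖g x‖) (d : ℕ) :
    Summable fun m : Fin d → α => ‖∏ i, g (m i)‖ := by
  induction d with
  | zero => exact Summable.of_finite
  | succ d ih =>
    refine (Fin.consEquiv fun _ => α).summable_iff.mp ?_
    exact (hg.mul_norm ih).congr fun p => congrArg norm (congrFun (prod_comp_consEquiv g d) p).symm

lemma hasSum_prod_fin {α R : Type*} [NormedCommRing R] [CompleteSpace R] {g : α → R} {a : R}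
    (hg : HasSum g a) (hnorm : Summable fun x => ‖g x‖) (d : ℕ) :
    HasSum (fun m : Fin d → α => ∏ i, g (m i)) (a ^ d) := by
  induction d with
  | zero => simp
  | succ d ih =>
    refine (Fin.consEquiv fun _ => α).hasSum_iff.mp ?_
    rw [prod_comp_consEquiv, pow_succ']
    have hsum : Summable fun p : α × (Fin d → α) => g p.1 * ∏ i, g (p.2 i) :=
      summable_mul_of_summable_norm (g := fun m : Fin d → α => ∏ i, g (m i)) hnorm
        (summable_norm_prod_fin hnorm d)
    exact HasSum.mul (g := fun m : Fin d → α => ∏ i, g (m i)) hg ih hsum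

lemma summable_norm_rpow_of_lt_neg_card {ι : Type*} [Fintype ι] {r : ℝ}
    (hr : r < -Fintype.card ι) : Summable fun m : ι → ℤ => ‖m‖ ^ r := by
  let b := Pi.basisFun ℝ ι
  let e := (b.restrictScalars ℤ).equivFun.symm
  have hrank : Module.finrank ℤ (Submodule.span ℤ (Set.range b)) = Fintype.card ι :=
    Module.finrank_eq_card_basis (b.restrictScalars ℤ)
  have hnorm (m : ι → ℤ) : ‖e m‖ = ‖m‖ := by
    have hcoe : (e m : ι → ℝ) = fun i => (m i : ℝ) := by
      funext i
      classical
      simp [e, b, Module.Basis.equivFun_symm_apply, Pi.single_apply]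
    rw [Submodule.coe_norm, hcoe, Pi.norm_def, Pi.norm_def]
    rfl
  have := ZLattice.summable_norm_rpow (Submodule.span ℤ (Set.range b)) r (by rwa [hrank])
  exact (e.toEquiv.summable_iff.mpr this).congr fun m => congrArg (· ^ r) (hnorm m)

lemma integrableOn_Ioi_div_rpow {s : ℝ} (hs : s ∈ Set.Ioo (0 : ℝ) 1) {f : ℝ → ℝ} {A B : ℝ}
    (hf : Measurable f) (hA : ∀ t, 0 < t → |f t| ≤ A * t) (hB : ∀ t, 0 < t → |f t| ≤ B) :
    IntegrableOn (fun t => f t / t ^ (1 + s)) (Set.Ioi 0) := by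
  have hloc : LocallyIntegrableOn f (Set.Ioi 0) :=
    locallyIntegrableOn_of_locallyIntegrable_restrict <|
      (locallyIntegrable_const B).mono hf.aestronglyMeasurable <|
        ae_restrict_of_forall_mem measurableSet_Ioi fun t ht => (hB t ht).trans (le_abs_self B)
  have htop : f =O[Filter.atTop] fun t : ℝ => t ^ (-0 : ℝ) := by
    refine .of_bound B ?_
    filter_upwards [Filter.eventually_gt_atTop 0] with t ht
    simpa using hB t ht
  have hzero : f =O[nhdsWithin 0 (Set.Ioi 0)] fun t : ℝ => t ^ (-(-1) : ℝ) := by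
    refine .of_bound A ?_
    filter_upwards [self_mem_nhdsWithin] with t ht
    simpa [abs_of_pos (Set.mem_Ioi.mp ht)] using hA t ht
  refine (mellin_convergent_of_isBigO_scalar (s := -s) hloc htop (by linarith [hs.1]) hzero
    (by linarith [hs.2])).congr_fun (fun t ht => ?_) measurableSet_Ioi
  simp only [div_eq_inv_mul]
  rw [← Real.rpow_neg (le_of_lt ht), neg_add', neg_sub_left]
  ring_nf

lemma integral_lt_integral_of_ae_lt {α : Type*} [MeasurableSpace α] {μ : Measure α} [NeZero μ]
    {f g : α → ℝ} (hf : Integrable f μ) (hg : Integrable g μ) (hlt : ∀ᵐ x ∂μ, f x < g x) :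
    ∫ x, f x ∂μ < ∫ x, g x ∂μ := by
  have hle : f ≤ᵐ[μ] g := hlt.mono fun _ => le_of_lt
  refine (integral_mono_ae hf hg hle).lt_of_ne fun heq => ?_
  obtain ⟨x, hx, hx'⟩ := (((integral_eq_iff_of_ae_le hf hg hle).mp heq).and hlt).exists
  exact hx'.ne hx

lemma exists_bounded_eq_mul {ι : Type*} {u w : ι → ℝ} {c M : ℝ} (hc : 0 < c)
    (hu : ∀ j, u j ≠ 0 → c ≤ |u j|) (hw : ∀ j, |w j| ≤ M) (h0 : ∀ j, u j = 0 → w j = 0) :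
    ∃ V : ι → ℝ, (∃ C, ∀ j, |V j| ≤ C) ∧ ∀ j, w j = V j * u j := by
  refine ⟨fun j => w j / u j, ⟨M / c, fun j => ?_⟩, fun j => ?_⟩
  · have hM : 0 ≤ M := (abs_nonneg _).trans (hw j)
    by_cases hj : u j = 0
    · simp only [hj, div_zero, abs_zero]
      positivity
    · rw [abs_div]
      exact div_le_div₀ hM (hw j) hc (hu j hj)
  · by_cases hj : u j = 0
    · simp [hj, h0 j hj]
    · rw [div_mul_cancel₀ _ hj]

lemma memLs_of_bounded {d : ℕ} {s : ℝ} (hs : 0 < s) {u : (Fin d → ℤ) → ℝ} {C : ℝ}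
    (hu : ∀ m, |u m| ≤ C) : memLs d s u := by
  have hsum : Summable fun m : Fin d → ℤ => C * ‖m‖ ^ (-((d : ℝ) + 2 * s)) :=
    (summable_norm_rpow_of_lt_neg_card (by rw [Fintype.card_fin]; linarith)).mul_left C
  refine hsum.of_norm_bounded_eventually ?_
  filter_upwards [(Set.finite_singleton (0 : Fin d → ℤ)).compl_mem_cofinite] with m hm
  have hnorm : ‖m‖ ≤ 1 + √(∑ i, (m i : ℝ) ^ 2) := by
    have : ‖m‖ ≤ √(∑ i, (m i : ℝ) ^ 2) := by
      refine (pi_norm_le_iff_of_nonneg (Real.sqrt_nonneg _)).mpr fun i => ?_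
      refine Real.le_sqrt_of_sq_le ?_
      rw [Int.norm_eq_abs, sq_abs]
      exact Finset.single_le_sum (f := fun i => (m i : ℝ) ^ 2) (fun i _ => sq_nonneg _)
        (Finset.mem_univ i)
    linarith
  have hweight : 0 ≤ (1 + √(∑ i, (m i : ℝ) ^ 2)) ^ (-((d : ℝ) + 2 * s)) := by positivity
  rw [norm_mul, Real.norm_eq_abs, abs_abs, Real.norm_of_nonneg hweight]
  exact mul_le_mul (hu m) (Real.rpow_le_rpow_of_nonpos (norm_pos_iff.mpr hm) hnorm
    (by have := d.cast_nonneg (α := ℝ); linarith)) hweight ((abs_nonneg _).trans (hu m))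

/-- The `ℓ`-th term of the power series of `besselI k t`, with the Gamma function at an integer
written as a factorial. -/
noncomputable def besselTerm (k : ℤ) (t : ℝ) (ℓ : ℕ) : ℝ :=
  (t / 2) ^ (2 * ℓ + k.natAbs) / (ℓ.factorial * (ℓ + k.natAbs).factorial)

lemma besselI_eq_tsum (k : ℤ) (t : ℝ) : besselI k t = ∑' ℓ, besselTerm k t ℓ := by
  simp only [besselI, besselTerm, ← Nat.cast_add, Real.Gamma_nat_eq_factorial]

/-- The bijection `(a, b) ↦ (a - b, min a b)`, which groups the pairs of natural numbers by their
difference. -/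
def diffMinEquiv : ℕ × ℕ ≃ ℤ × ℕ where
  toFun p := ((p.1 : ℤ) - p.2, min p.1 p.2)
  invFun q := (q.2 + q.1.toNat, q.2 + (-q.1).toNat)
  left_inv p := by ext <;> dsimp only <;> omega
  right_inv q := by ext <;> dsimp only <;> omega

lemma besselTerm_diffMinEquiv (t : ℝ) (p : ℕ × ℕ) :
    besselTerm (diffMinEquiv p).1 t (diffMinEquiv p).2 =
      (t / 2) ^ p.1 / p.1.factorial * ((t / 2) ^ p.2 / p.2.factorial) := by
  obtain ⟨a, b⟩ := p
  simp only [diffMinEquiv, Equiv.coe_fn_mk, besselTerm]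
  rcases le_total a b with hab | hab
  · rw [show ((a : ℤ) - b).natAbs = b - a by omega, min_eq_left hab,
      show a + (b - a) = b by omega, show 2 * a + (b - a) = a + b by omega, pow_add]
    field_simp
  · rw [show ((a : ℤ) - b).natAbs = a - b by omega, min_eq_right hab,
      show b + (a - b) = a by omega, show 2 * b + (a - b) = a + b by omega, pow_add]
    field_simp

lemma hasSum_besselTerm_prod (t : ℝ) :
    HasSum (fun q : ℤ × ℕ => besselTerm q.1 t q.2) (Real.exp t) := by
  have hexp : HasSum (fun n : ℕ => (t / 2) ^ n / (n.factorial : ℝ)) (Real.exp (t / 2)) := by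
    rw [Real.exp_eq_exp_ℝ]
    exact NormedSpace.expSeries_div_hasSum_exp (t / 2)
  have hprod := hexp.mul hexp
    (summable_mul_of_summable_norm hexp.summable.norm hexp.summable.norm)
  rw [← Real.exp_add, add_halves] at hprod
  rw [← diffMinEquiv.hasSum_iff]
  exact hprod.congr_fun fun p => besselTerm_diffMinEquiv t p

lemma hasSum_besselTerm (k : ℤ) (t : ℝ) : HasSum (besselTerm k t) (besselI k t) := by
  rw [besselI_eq_tsum]
  exact ((hasSum_besselTerm_prod t).summable.prod_factor k).hasSum

lemma hasSum_besselI (t : ℝ) : HasSum (fun k : ℤ => besselI k t) (Real.exp t) :=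
  (hasSum_besselTerm_prod t).prod_fiberwise fun k => hasSum_besselTerm k t

@[fun_prop]
lemma measurable_besselI (k : ℤ) : Measurable (besselI k) := by
  refine measurable_of_tendsto_metrizable
    (f := fun n t => ∑ ℓ ∈ Finset.range n, besselTerm k t ℓ) (fun n => ?_)
    (tendsto_pi_nhds.mpr fun t => (hasSum_besselTerm k t).tendsto_sum_nat)
  unfold besselTerm
  fun_prop

lemma besselI_congr_natAbs {k l : ℤ} (hkl : k.natAbs = l.natAbs) : besselI k = besselI l := by
  funext t
  simp only [besselI, hkl]

lemma besselTerm_pos (k : ℤ) {t : ℝ} (ht : 0 < t) (ℓ : ℕ) : 0 < besselTerm k t ℓ := by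
  unfold besselTerm
  positivity

lemma besselI_pos (k : ℤ) {t : ℝ} (ht : 0 < t) : 0 < besselI k t :=
  (besselTerm_pos k ht 0).trans_le <|
    le_hasSum (hasSum_besselTerm k t) 0 fun ℓ _ => (besselTerm_pos k ht ℓ).le

lemma one_le_besselI_zero {t : ℝ} (ht : 0 < t) : 1 ≤ besselI 0 t := by
  simpa [besselTerm] using
    le_hasSum (hasSum_besselTerm 0 t) 0 fun ℓ _ => (besselTerm_pos 0 ht ℓ).le

lemma besselTerm_add_two_le (n : ℕ) {t : ℝ} (ht : 0 < t) (ℓ : ℕ) :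
    besselTerm (n + 2) t ℓ ≤ besselTerm n t (ℓ + 1) := by
  have hfact : (ℓ + 1).factorial * (ℓ + 1 + n).factorial ≤
      ℓ.factorial * (ℓ + (n + 2)).factorial := by
    calc (ℓ + 1).factorial * (ℓ + 1 + n).factorial
        = (ℓ + 1) * (ℓ.factorial * (ℓ + n + 1).factorial) := by
          rw [Nat.factorial_succ, mul_assoc, Nat.add_right_comm]
      _ ≤ (ℓ + n + 2) * (ℓ.factorial * (ℓ + n + 1).factorial) := Nat.mul_le_mul_right _ (by omega)
      _ = ℓ.factorial * (ℓ + (n + 2)).factorial := by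
          rw [← add_assoc, Nat.factorial_succ (ℓ + n + 1)]
          ring
  have hcast : ((n : ℤ) + 2).natAbs = n + 2 := by omega
  simp only [besselTerm, hcast, Int.natAbs_natCast]
  rw [show 2 * (ℓ + 1) + n = 2 * ℓ + (n + 2) by ring]
  gcongr _ / ?_
  exact_mod_cast hfact

lemma besselI_add_two_lt (n : ℕ) {t : ℝ} (ht : 0 < t) : besselI (n + 2) t < besselI n t := by
  have htail := (hasSum_nat_add_iff' 1).mpr (hasSum_besselTerm n t)
  rw [Finset.sum_range_one] at htail
  have hle := hasSum_le (besselTerm_add_two_le n ht) (hasSum_besselTerm (n + 2) t) htail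
  linarith [besselTerm_pos n ht 0]

lemma heatG_eq_prod (d : ℕ) (m : Fin d → ℤ) (t : ℝ) :
    heatG d m t = ∏ i, Real.exp (-(2 * t)) * besselI (m i) (2 * t) := by
  rw [heatG, Finset.prod_mul_distrib, Finset.prod_const, Finset.card_univ, Fintype.card_fin,
    ← Real.exp_nat_mul]
  ring_nf

lemma hasSum_heatG (d : ℕ) (t : ℝ) : HasSum (fun m : Fin d → ℤ => heatG d m t) 1 := by
  have hsum : HasSum (fun k : ℤ => Real.exp (-(2 * t)) * besselI k (2 * t)) 1 := by
    simpa [← Real.exp_add] using (hasSum_besselI (2 * t)).mul_left (Real.exp (-(2 * t)))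
  simpa only [heatG_eq_prod, one_pow] using hasSum_prod_fin hsum hsum.summable.norm d

lemma measurable_heatG (d : ℕ) (m : Fin d → ℤ) : Measurable (heatG d m) := by
  unfold heatG
  fun_prop

lemma heatG_pos (d : ℕ) (m : Fin d → ℤ) {t : ℝ} (ht : 0 < t) : 0 < heatG d m t :=
  mul_pos (Real.exp_pos _) (Finset.prod_pos fun i _ => besselI_pos (m i) (by positivity))

lemma sum_heatG_le_one_sub {d : ℕ} {F : Finset (Fin d → ℤ)} (hF : 0 ∉ F) {t : ℝ} (ht : 0 < t) :
    ∑ m ∈ F, heatG d m t ≤ 1 - heatG d 0 t := by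
  have := sum_le_hasSum (insert 0 F) (fun m _ => (heatG_pos d m ht).le) (hasSum_heatG d t)
  rw [Finset.sum_insert hF] at this
  linarith

lemma one_sub_heatG_zero_le (d : ℕ) {t : ℝ} (ht : 0 < t) : 1 - heatG d 0 t ≤ 2 * d * t := by
  have hbessel : 1 ≤ ∏ i, besselI ((0 : Fin d → ℤ) i) (2 * t) :=
    Finset.one_le_prod fun i _ => one_le_besselI_zero (by positivity)
  have hheat : Real.exp (-(2 * d * t)) ≤ heatG d 0 t :=
    le_mul_of_one_le_right (Real.exp_pos _).le hbessel
  linarith [Real.add_one_le_exp (-(2 * d * t))]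

lemma integrableOn_heatG_div_rpow {d : ℕ} {s : ℝ} (hs : s ∈ Set.Ioo (0 : ℝ) 1) {m : Fin d → ℤ}
    (hm : m ≠ 0) : IntegrableOn (fun t => heatG d m t / t ^ (1 + s)) (Set.Ioi 0) := by
  have hle (t : ℝ) (ht : 0 < t) : |heatG d m t| ≤ 1 - heatG d 0 t := by
    rw [abs_of_pos (heatG_pos d m ht)]
    simpa using sum_heatG_le_one_sub (F := {m}) (by simpa using hm.symm) ht
  exact integrableOn_Ioi_div_rpow hs (measurable_heatG d m)
    (fun t ht => (hle t ht).trans (one_sub_heatG_zero_le d ht))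
    (fun t ht => (hle t ht).trans (sub_le_self 1 (heatG_pos d 0 ht).le))

lemma integrableOn_one_sub_heatG_zero_div_rpow (d : ℕ) {s : ℝ} (hs : s ∈ Set.Ioo (0 : ℝ) 1) :
    IntegrableOn (fun t => (1 - heatG d 0 t) / t ^ (1 + s)) (Set.Ioi 0) := by
  have habs (t : ℝ) (ht : 0 < t) : |1 - heatG d 0 t| = 1 - heatG d 0 t :=
    abs_of_nonneg (by simpa using sum_heatG_le_one_sub (Finset.notMem_empty _) ht)
  refine integrableOn_Ioi_div_rpow (A := 2 * d) (B := 1) hs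
    ((measurable_heatG d 0).const_sub 1) (fun t ht => ?_) (fun t ht => ?_) <;> rw [habs t ht]
  · exact one_sub_heatG_zero_le d ht
  · exact sub_le_self 1 (heatG_pos d 0 ht).le

lemma heatG_cons_add_two_lt {d : ℕ} (n : ℕ) (m : Fin d → ℤ) {t : ℝ} (ht : 0 < t) :
    heatG (d + 1) (Fin.cons (n + 2) m) t < heatG (d + 1) (Fin.cons n m) t := by
  simp only [heatG_eq_prod, Fin.prod_univ_succ, Fin.cons_zero, Fin.cons_succ]
  have h2t : 0 < 2 * t := by positivity
  have htail : 0 < ∏ i, Real.exp (-(2 * t)) * besselI (m i) (2 * t) :=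
    Finset.prod_pos fun i _ => mul_pos (Real.exp_pos _) (besselI_pos (m i) h2t)
  have := besselI_add_two_lt n h2t
  gcongr

lemma Ksh_zero (d : ℕ) (h s : ℝ) : Ksh d h s 0 = 0 := if_pos rfl

lemma Ksh_of_ne_zero {d : ℕ} (h s : ℝ) {m : Fin d → ℤ} (hm : m ≠ 0) :
    Ksh d h s m = h ^ (-(2 * s)) * |Real.Gamma (-s)|⁻¹ *
      ∫ t in Set.Ioi (0 : ℝ), heatG d m t / t ^ (1 + s) := if_neg hm

lemma Ksh_const_pos {h s : ℝ} (hh : 0 < h) (hs : s ∈ Set.Ioo (0 : ℝ) 1) :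
    0 < h ^ (-(2 * s)) * |Real.Gamma (-s)|⁻¹ := by
  have hGamma : Real.Gamma (-s) ≠ 0 := by
    refine Real.Gamma_ne_zero fun n hn => ?_
    obtain ⟨hpos, hlt⟩ := neg_injective hn ▸ hs
    norm_cast at hpos hlt
    omega
  positivity

lemma Ksh_nonneg (d : ℕ) {h : ℝ} (hh : 0 < h) (s : ℝ) (m : Fin d → ℤ) : 0 ≤ Ksh d h s m := by
  rcases eq_or_ne m 0 with rfl | hm
  · rw [Ksh_zero]
  rw [Ksh_of_ne_zero h s hm]
  have : 0 ≤ ∫ t in Set.Ioi (0 : ℝ), heatG d m t / t ^ (1 + s) :=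
    setIntegral_nonneg measurableSet_Ioi fun t ht =>
      div_nonneg (heatG_pos d m ht).le (Real.rpow_nonneg (le_of_lt ht) _)
  positivity

lemma sum_Ksh_le {d : ℕ} {h s : ℝ} (hh : 0 < h) (hs : s ∈ Set.Ioo (0 : ℝ) 1)
    (F : Finset (Fin d → ℤ)) :
    ∑ m ∈ F, Ksh d h s m ≤ h ^ (-(2 * s)) * |Real.Gamma (-s)|⁻¹ *
      ∫ t in Set.Ioi (0 : ℝ), (1 - heatG d 0 t) / t ^ (1 + s) := by
  have hint (m) (hm : m ∈ F.erase 0) :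
      IntegrableOn (fun t => heatG d m t / t ^ (1 + s)) (Set.Ioi 0) :=
    integrableOn_heatG_div_rpow hs (Finset.ne_of_mem_erase hm)
  rw [← Finset.sum_erase F (Ksh_zero d h s),
    Finset.sum_congr rfl fun m hm => Ksh_of_ne_zero h s (Finset.ne_of_mem_erase hm),
    ← Finset.mul_sum, ← integral_finsetSum _ hint]
  refine mul_le_mul_of_nonneg_left ?_ (Ksh_const_pos hh hs).le
  refine setIntegral_mono_on (integrable_finsetSum _ hint)
    (integrableOn_one_sub_heatG_zero_div_rpow d hs) measurableSet_Ioi fun t ht => ?_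
  have := Set.mem_Ioi.mp ht
  rw [← Finset.sum_div]
  gcongr
  exact sum_heatG_le_one_sub (Finset.notMem_erase 0 F) ht

lemma summable_Ksh (d : ℕ) {h s : ℝ} (hh : 0 < h) (hs : s ∈ Set.Ioo (0 : ℝ) 1) :
    Summable (Ksh d h s) :=
  summable_of_sum_le (Ksh_nonneg d hh s) (sum_Ksh_le hh hs)

lemma Ksh_congr_natAbs {d : ℕ} (h s : ℝ) {m l : Fin d → ℤ}
    (hml : ∀ i, (m i).natAbs = (l i).natAbs) : Ksh d h s m = Ksh d h s l := by
  have hzero : m = 0 ↔ l = 0 := by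
    simp only [funext_iff, Pi.zero_apply, ← Int.natAbs_eq_zero, hml]
  simp only [Ksh, heatG, hzero, fun i => besselI_congr_natAbs (hml i)]

lemma Ksh_cons_add_two_lt {d : ℕ} {h s : ℝ} (hh : 0 < h) (hs : s ∈ Set.Ioo (0 : ℝ) 1) {n : ℕ}
    (hn : n ≠ 0) (m : Fin d → ℤ) :
    Ksh (d + 1) h s (Fin.cons (n + 2) m) < Ksh (d + 1) h s (Fin.cons n m) := by
  have hne : (Fin.cons n m : Fin (d + 1) → ℤ) ≠ 0 := fun h0 => hn <| by
    simpa using congrFun h0 0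
  have hne' : (Fin.cons (n + 2) m : Fin (d + 1) → ℤ) ≠ 0 := fun h0 => by
    have : (n : ℤ) + 2 = 0 := by simpa using congrFun h0 0
    omega
  rw [Ksh_of_ne_zero h s hne, Ksh_of_ne_zero h s hne']
  refine mul_lt_mul_of_pos_left ?_ (Ksh_const_pos hh hs)
  have : NeZero (volume.restrict (Set.Ioi (0 : ℝ))) := ⟨by simp⟩
  refine integral_lt_integral_of_ae_lt (integrableOn_heatG_div_rpow hs hne')
    (integrableOn_heatG_div_rpow hs hne) ?_
  refine ae_restrict_of_forall_mem measurableSet_Ioi fun t ht => ?_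
  have : 0 < t := ht
  have := heatG_cons_add_two_lt n m this
  gcongr

section FirstMarginal

variable {α : Type*} {d : ℕ} {K : (Fin (d + 1) → α) → ℝ}

/-- The marginal of `K` in the first coordinate, the kernel through which `K` acts on functions
of that coordinate. -/
noncomputable def firstMarginal (K : (Fin (d + 1) → α) → ℝ) (n : α) : ℝ :=
  ∑' m : Fin d → α, K (Fin.cons n m)

lemma summable_comp_cons (hK : Summable K) :
    Summable fun p : α × (Fin d → α) => K (Fin.cons p.1 p.2) :=
  (Fin.consEquiv fun _ => α).summable_iff.mpr hK

lemma summable_firstMarginal (hK : Summable K) : Summable (firstMarginal K) :=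
  (summable_comp_cons hK).prod

end FirstMarginal

lemma norm_sub_apply_mul_le {α : Type*} {u : α → ℝ} {C : ℝ} (hu : ∀ m, |u m| ≤ C) (i j : α)
    (x : ℝ) : ‖(u i - u j) * x‖ ≤ 2 * C * ‖x‖ := by
  rw [norm_mul]
  gcongr
  calc ‖u i - u j‖ ≤ |u i| + |u j| := abs_sub _ _
    _ ≤ 2 * C := by linarith [hu i, hu j]

section NonlocalOperator

variable {G : Type*} [AddCommGroup G] {K u : G → ℝ} {C : ℝ}

/-- The nonlocal operator `u ↦ ∑ m, (u j - u m) K (j - m)` with convolution kernel `K`;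
`fracLap d h s` is the case `K = Ksh d h s`. -/
noncomputable def nonlocalOp (K u : G → ℝ) (j : G) : ℝ :=
  ∑' m, (u j - u m) * K (j - m)

lemma nonlocalOp_eq_tsum_sub (K u : G → ℝ) (j : G) :
    nonlocalOp K u j = ∑' m, (u j - u (j - m)) * K m := by
  rw [nonlocalOp, ← (Equiv.subLeft j).tsum_eq]
  simp only [Equiv.subLeft_apply, sub_sub_cancel]

lemma summable_nonlocalOp (hK : Summable K) (hu : ∀ m, |u m| ≤ C) (j : G) :
    Summable fun m => (u j - u (j - m)) * K m :=
  (hK.norm.mul_left (2 * C)).of_norm_bounded fun m => norm_sub_apply_mul_le hu j (j - m) (K m)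

lemma abs_nonlocalOp_le (hK : Summable K) (hu : ∀ m, |u m| ≤ C) (j : G) :
    |nonlocalOp K u j| ≤ 2 * C * ∑' m, ‖K m‖ := by
  rw [nonlocalOp_eq_tsum_sub]
  exact tsum_of_norm_bounded (hK.norm.hasSum.mul_left (2 * C)) fun m =>
    norm_sub_apply_mul_le hu j (j - m) (K m)

lemma two_mul_nonlocalOp_eq_tsum (hK : Summable K) (hKeven : K.Even) (hu : ∀ m, |u m| ≤ C)
    (j : G) :
    2 * nonlocalOp K u j = ∑' m, (2 * u j - u (j - m) - u (j + m)) * K m := by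
  have hsum := summable_nonlocalOp hK hu j
  have hneg : nonlocalOp K u j = ∑' m, (u j - u (j + m)) * K m := by
    rw [nonlocalOp_eq_tsum_sub, ← (Equiv.neg G).tsum_eq]
    simp only [Equiv.neg_apply, sub_neg_eq_add, hKeven _]
  have hsum_neg : Summable fun m => (u j - u (j + m)) * K m := by
    refine ((Equiv.neg G).summable_iff.mpr hsum).congr fun m => ?_
    simp only [Function.comp_apply, Equiv.neg_apply, sub_neg_eq_add, hKeven _]
  rw [two_mul]
  nth_rw 1 [nonlocalOp_eq_tsum_sub]
  rw [hneg, ← hsum.tsum_add hsum_neg]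
  exact tsum_congr fun m => by ring

lemma odd_nonlocalOp (hKeven : K.Even) (hu : u.Odd) : (nonlocalOp K u).Odd := fun j => by
  rw [nonlocalOp, nonlocalOp, ← (Equiv.neg G).tsum_eq, ← tsum_neg]
  refine tsum_congr fun m => ?_
  rw [Equiv.neg_apply, hu j, hu m, show -j - -m = -(j - m) by abel, hKeven]
  ring

lemma nonlocalOp_comp_apply_zero {d : ℕ} {K : (Fin (d + 1) → G) → ℝ} (hK : Summable K)
    {f : G → ℝ} (hf : ∀ n, |f n| ≤ C) (j : Fin (d + 1) → G) :
    nonlocalOp K (fun m => f (m 0)) j = nonlocalOp (firstMarginal K) f (j 0) := by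
  have hsum : Summable fun p : G × (Fin d → G) =>
      (f (j 0) - f (j 0 - p.1)) * K (Fin.cons p.1 p.2) :=
    ((summable_comp_cons hK).norm.mul_left (2 * C)).of_norm_bounded fun p =>
      norm_sub_apply_mul_le hf (j 0) (j 0 - p.1) _
  calc nonlocalOp K (fun m => f (m 0)) j
      = ∑' p : G × (Fin d → G), (f (j 0) - f (j 0 - p.1)) * K (Fin.cons p.1 p.2) := by
        rw [nonlocalOp_eq_tsum_sub, ← (Fin.consEquiv fun _ => G).tsum_eq]
        rfl
    _ = ∑' n, (f (j 0) - f (j 0 - n)) * firstMarginal K n := by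
        simp only [hsum.tsum_prod, tsum_mul_left, firstMarginal]
    _ = nonlocalOp (firstMarginal K) f (j 0) := (nonlocalOp_eq_tsum_sub _ _ _).symm

end NonlocalOperator

lemma even_firstMarginal_Ksh (d : ℕ) (h s : ℝ) : (firstMarginal (Ksh (d + 1) h s)).Even :=
  fun n => tsum_congr fun m => Ksh_congr_natAbs h s <| Fin.cases (by simp) (by simp)

lemma firstMarginal_Ksh_add_two_lt (d : ℕ) {h s : ℝ} (hh : 0 < h) (hs : s ∈ Set.Ioo (0 : ℝ) 1)
    {n : ℕ} (hn : n ≠ 0) :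
    firstMarginal (Ksh (d + 1) h s) (n + 2) < firstMarginal (Ksh (d + 1) h s) n := by
  have hlt := Ksh_cons_add_two_lt (d := d) hh hs hn
  have hsum := summable_comp_cons (summable_Ksh (d + 1) hh hs)
  exact (hsum.prod_factor _).tsum_lt_tsum (fun m => (hlt m).le) (hlt 0) (hsum.prod_factor _)

/-- The odd function on `ℤ` that vanishes on `{-1, 0, 1}`, is `-b` at `2` and is constantly `a`
from `3` on. -/
noncomputable def slabProfile (a b : ℝ) (n : ℤ) : ℝ :=
  if n.natAbs ≤ 1 then 0 else n.sign * if n.natAbs = 2 then -b else a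

lemma slabProfile_eq_zero (a b : ℝ) {n : ℤ} (hn : n.natAbs ≤ 1) : slabProfile a b n = 0 :=
  if_pos hn

lemma odd_slabProfile (a b : ℝ) : (slabProfile a b).Odd := fun n => by
  simp only [slabProfile, Int.natAbs_neg, Int.sign_neg]
  split_ifs <;> push_cast <;> ring

lemma slabProfile_of_three_le (a b : ℝ) {n : ℤ} (hn : 3 ≤ n) : slabProfile a b n = a := by
  rw [slabProfile, if_neg (by omega), if_neg (by omega), Int.sign_eq_one_of_pos (by omega)]
  simp

lemma abs_slabProfile_of_one_lt (a b : ℝ) {n : ℤ} (hn : 1 < n.natAbs) :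
    |slabProfile a b n| = if n.natAbs = 2 then |b| else |a| := by
  have hsign : |(n.sign : ℝ)| = 1 := by
    rw [← Int.cast_abs, Int.abs_sign_of_ne_zero (by omega), Int.cast_one]
  rw [slabProfile, if_neg hn.not_ge, abs_mul, hsign, one_mul]
  split_ifs <;> simp

lemma abs_slabProfile_le (a b : ℝ) (n : ℤ) : |slabProfile a b n| ≤ max |a| |b| := by
  rcases le_or_gt n.natAbs 1 with hn | hn
  · simp [slabProfile_eq_zero a b hn]
  · rw [abs_slabProfile_of_one_lt a b hn]
    split_ifs <;> simp

lemma min_le_abs_slabProfile (a b : ℝ) {n : ℤ} (hn : 1 < n.natAbs) :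
    min |a| |b| ≤ |slabProfile a b n| := by
  rw [abs_slabProfile_of_one_lt a b hn]
  split_ifs <;> simp

lemma slabProfile_eq_zero_iff {a b : ℝ} (ha : a ≠ 0) (hb : b ≠ 0) {n : ℤ} :
    slabProfile a b n = 0 ↔ n.natAbs ≤ 1 := by
  refine ⟨fun hn => ?_, slabProfile_eq_zero a b⟩
  by_contra! hlt
  have := min_le_abs_slabProfile a b hlt
  rw [hn, abs_zero] at this
  exact this.not_gt (lt_min (abs_pos.mpr ha) (abs_pos.mpr hb))

lemma slabProfile_sub_add_eq_zero (a b : ℝ) {j n : ℤ} (hj : j.natAbs ≤ 1) (hn : 3 < n.natAbs) :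
    slabProfile a b (j - n) + slabProfile a b (j + n) = 0 := by
  rcases lt_or_gt_of_ne (show n ≠ 0 by omega) with hneg | hpos
  · rw [← neg_neg (j + n), odd_slabProfile, slabProfile_of_three_le a b (by omega),
      slabProfile_of_three_le a b (by omega), add_neg_cancel]
  · rw [← neg_neg (j - n), odd_slabProfile, slabProfile_of_three_le a b (by omega),
      slabProfile_of_three_le a b (by omega), neg_add_cancel]

lemma nonlocalOp_slabProfile_one {k : ℤ → ℝ} (hk : Summable k) (hkeven : k.Even) (a b : ℝ) :
    nonlocalOp k (slabProfile a b) 1 = b * k 1 - a * k 2 - (a + b) * k 3 := by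
  set f := slabProfile a b with hf
  have hf1 : f 1 = 0 := slabProfile_eq_zero a b (by simp)
  have hfar (n : ℤ) (hn : n ∉ Finset.Icc (-3) 3) : (2 * f 1 - f (1 - n) - f (1 + n)) * k n = 0 := by
    rw [Finset.mem_Icc] at hn
    rw [hf1, sub_sub, slabProfile_sub_add_eq_zero a b (by simp) (by omega)]
    ring
  have hdiff := two_mul_nonlocalOp_eq_tsum hk hkeven (abs_slabProfile_le a b) 1
  have hIcc : Finset.Icc (-3 : ℤ) 3 = {-3, -2, -1, 0, 1, 2, 3} := rfl
  rw [← hf, tsum_eq_sum hfar, hIcc] at hdiff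
  norm_num [hf, slabProfile, Int.sign_eq_one_of_pos, hkeven 1, hkeven 2, hkeven 3] at hdiff ⊢
  linear_combination hdiff / 2

lemma nonlocalOp_slabProfile_eq_zero {k : ℤ → ℝ} (hk : Summable k) (hkeven : k.Even) {j : ℤ}
    (hj : j.natAbs ≤ 1) : nonlocalOp k (slabProfile (k 1 - k 3) (k 2 + k 3)) j = 0 := by
  have hodd := odd_nonlocalOp hkeven (odd_slabProfile (k 1 - k 3) (k 2 + k 3))
  have hone : nonlocalOp k (slabProfile (k 1 - k 3) (k 2 + k 3)) 1 = 0 := by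
    rw [nonlocalOp_slabProfile_one hk hkeven]
    ring
  obtain rfl | rfl | rfl : j = -1 ∨ j = 0 ∨ j = 1 := by omega
  · rw [hodd, hone, neg_zero]
  · exact hodd.map_zero
  · exact hone

theorem slab_failure_WUCP_general (d : ℕ) (h s : ℝ) (hh : 0 < h) (hs : s ∈ Set.Ioo (0 : ℝ) 1) :
    ∃ u V : (Fin (d + 1) → ℤ) → ℝ, u ≠ 0 ∧ memLs (d + 1) s u ∧ (∃ C : ℝ, ∀ j, |V j| ≤ C) ∧
      (∀ j, fracLap (d + 1) h s u j = V j * u j) ∧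
      (∀ j, (j 0 = -1 ∨ j 0 = 0 ∨ j 0 = 1) → u j = 0) := by
  have hK := summable_Ksh (d + 1) hh hs
  set k := firstMarginal (Ksh (d + 1) h s)
  have hk : Summable k := summable_firstMarginal hK
  have hk_nonneg (n : ℤ) : 0 ≤ k n := tsum_nonneg fun _ => Ksh_nonneg (d + 1) hh s _
  have ha : k 1 - k 3 ≠ 0 := (sub_pos.mpr (firstMarginal_Ksh_add_two_lt d hh hs one_ne_zero)).ne'
  have hb : k 2 + k 3 ≠ 0 := by
    have : k 4 < k 2 := firstMarginal_Ksh_add_two_lt d hh hs two_ne_zero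
    linarith [hk_nonneg 3, hk_nonneg 4]
  set f := slabProfile (k 1 - k 3) (k 2 + k 3)
  have hf := abs_slabProfile_le (k 1 - k 3) (k 2 + k 3)
  obtain ⟨V, hV, hVu⟩ := exists_bounded_eq_mul (u := fun j : Fin (d + 1) → ℤ => f (j 0))
    (lt_min (abs_pos.mpr ha) (abs_pos.mpr hb))
    (fun j hj => min_le_abs_slabProfile _ _ (not_le.mp (mt (slabProfile_eq_zero _ _) hj)))
    (abs_nonlocalOp_le hK fun m => hf (m 0)) fun j hj => by
      rw [nonlocalOp_comp_apply_zero hK hf]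
      refine nonlocalOp_slabProfile_eq_zero hk (even_firstMarginal_Ksh d h s) ?_
      exact (slabProfile_eq_zero_iff ha hb).mp hj
  refine ⟨fun j => f (j 0), V, fun hzero => ha ?_, memLs_of_bounded hs.1 fun m => hf (m 0), hV,
    hVu, fun j hj => slabProfile_eq_zero _ _ (by omega)⟩
  exact (slabProfile_of_three_le _ _ le_rfl).symm.trans (congrFun hzero fun _ => 3)

/-- Failure of weak unique continuation from slab domains in two dimensions:
there are a nontrivial `u ∈ ℓ_s` and a bounded potential `V` with
`(-Δ_d)^s u = V u` on all of `ℤ²` and `u = 0` on the slab `{j : j₁ ∈ {-1,0,1}}`. -/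
theorem slab_failure_WUCP (h s : ℝ) (hh : 0 < h) (hs : s ∈ Set.Ioo (0 : ℝ) 1) :
    ∃ u V : (Fin 2 → ℤ) → ℝ, u ≠ 0 ∧ memLs 2 s u ∧ (∃ C : ℝ, ∀ j, |V j| ≤ C) ∧
      (∀ j : Fin 2 → ℤ, fracLap 2 h s u j = V j * u j) ∧
      (∀ j : Fin 2 → ℤ, (j 0 = -1 ∨ j 0 = 0 ∨ j 0 = 1) → u j = 0) :=
  slab_failure_WUCP_general 1 h s hh hs
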